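/- arXiv:2012.11640 — 2 statements merged into one kernel-verified Lean document; each statement's English description precedes it below -/
import Mathlib

section
/- Let ι be a nonempty finite index set, and for each j ∈ ι let 𝔤_j be a finite-dimensional real Lie algebra with an invariant inner product and 𝔥_j ⊊ 𝔤_j a Lie subalgebra, with 𝔭_j the orthogonal complement of 𝔥_j in 𝔤_j (assumed nonzero). Equip the product Lie algebra 𝔤 = Π_j 𝔤_j with the product inner product, and let 𝔥 = Π_j 𝔥_j, so that the orthogonal complement of 𝔥 in 𝔤 is 𝔭 = Π_j 𝔭_j. Then b(𝔤,𝔥) = max over j ∈ ι of ( b(𝔤_j,𝔥_j) + dim 𝔭 − dim 𝔭_j ). In particular, for a normal homogeneous product G/H = G₁/H₁ × … × G_s/H_s one has b(G/H) = max_j ( b(G_j/H_j) + dim G/H − dim G_j/H_j ). -/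
open Module

section PiLie

variable {ι : Type*} {L : ι → Type*}

/-- The product of a family of Lie rings, with componentwise bracket. -/
instance Pi.instLieRing [∀ i, LieRing (L i)] : LieRing (∀ i, L i) :=
  { (inferInstance : AddCommGroup (∀ i, L i)) with
    bracket := fun x y i => ⁅x i, y i⁆
    add_lie := fun x y z => funext fun i => add_lie (x i) (y i) (z i)
    lie_add := fun x y z => funext fun i => lie_add (x i) (y i) (z i)
    lie_self := fun x => funext fun i => lie_self (x i)
    leibniz_lie := fun x y z => funext fun i => leibniz_lie (x i) (y i) (z i) }

/-- The product of a family of real Lie algebras. -/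
instance Pi.instLieAlgebra [∀ i, LieRing (L i)] [∀ i, LieAlgebra ℝ (L i)] :
    LieAlgebra ℝ (∀ i, L i) :=
  { (inferInstance : Module ℝ (∀ i, L i)) with
    lie_smul := fun t x y => funext fun i => lie_smul t (x i) (y i) }

end PiLie

/-- For a submodule `𝔥` of a real Lie algebra `𝔤` with an inner product `B`, `bInv B 𝔥` is
the maximum, over nonzero `x` in the orthogonal complement `𝔭 = 𝔥^⊥`, of the dimension of
the centralizer `Z_𝔭(x) = {y ∈ 𝔭 : ⁅x,y⁆ = 0}`; this is the invariant `b(G/H)` of a normal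
homogeneous space. -/
noncomputable def bInv {𝔤 : Type*} [LieRing 𝔤] [LieAlgebra ℝ 𝔤]
    (B : LinearMap.BilinForm ℝ 𝔤) (𝔥 : Submodule ℝ 𝔤) : ℕ :=
  sSup {n : ℕ | ∃ x : 𝔤, x ∈ LinearMap.BilinForm.orthogonal B 𝔥 ∧ x ≠ 0 ∧
    n = finrank ℝ ↥(LinearMap.BilinForm.orthogonal B 𝔥 ⊓
      LinearMap.ker (LieAlgebra.ad ℝ 𝔤 x))}

/-! The orthogonal complement of a product is the product of the orthogonal complements, and
centralizers in a product are computed componentwise. Hence the codimension of `Z_𝔭(x)` in `𝔭` is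
the sum over `j` of the codimensions of `Z_{𝔭_j}(x_j)` in `𝔭_j`, where `x_j = 0` contributes
nothing. It is therefore minimal, over nonzero `x`, at some `x` with a single nonzero component. -/

section Pi

variable {ι : Type*}

lemma pi_univ_ne_bot {R : Type*} [Semiring R] {M : ι → Type*} [∀ i, AddCommMonoid (M i)]
    [∀ i, Module R (M i)] {p : ∀ i, Submodule R (M i)} {i : ι} (hi : p i ≠ ⊥) :
    Submodule.pi Set.univ p ≠ ⊥ := by
  classical
  obtain ⟨x, hx, hx0⟩ := Submodule.exists_mem_ne_zero_of_ne_bot hi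
  exact (Submodule.ne_bot_iff _).2
    ⟨Pi.single i x, Submodule.le_comap_single_pi p hx, Pi.single_ne_zero_iff.2 hx0⟩

/-- The product of a family of submodules, as a submodule of the product of the ambient modules, is
the product of the submodules regarded as modules. -/
def submodulePiEquiv {R : Type*} [Semiring R] {M : ι → Type*} [∀ i, AddCommMonoid (M i)]
    [∀ i, Module R (M i)] (p : ∀ i, Submodule R (M i)) :
    Submodule.pi Set.univ p ≃ₗ[R] ∀ i, p i where
  toFun x i := ⟨x.1 i, x.2 i (Set.mem_univ i)⟩
  invFun y := ⟨fun i => y i, fun i _ => (y i).2⟩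
  map_add' _ _ := rfl
  map_smul' _ _ := rfl

lemma finrank_submodule_pi [Fintype ι] {R : Type*} [Ring R] [StrongRankCondition R]
    {M : ι → Type*} [∀ i, AddCommGroup (M i)] [∀ i, Module R (M i)] (p : ∀ i, Submodule R (M i))
    [∀ i, Module.Free R (p i)] [∀ i, Module.Finite R (p i)] :
    finrank R (Submodule.pi Set.univ p) = ∑ i, finrank R (p i) := by
  rw [(submodulePiEquiv p).finrank_eq, finrank_pi_fintype R]

lemma orthogonal_pi [Fintype ι] {R : Type*} [CommSemiring R] {M : ι → Type*}
    [∀ i, AddCommMonoid (M i)] [∀ i, Module R (M i)] {B : ∀ i, LinearMap.BilinForm R (M i)}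
    {Bprod : LinearMap.BilinForm R (∀ i, M i)}
    (hBprod : ∀ x y, Bprod x y = ∑ i, B i (x i) (y i)) (p : ∀ i, Submodule R (M i)) :
    Bprod.orthogonal (Submodule.pi Set.univ p) =
      Submodule.pi Set.univ fun i => (B i).orthogonal (p i) := by
  classical
  ext x
  simp only [LinearMap.BilinForm.mem_orthogonal_iff, Submodule.mem_pi, Set.mem_univ, true_imp_iff]
  constructor
  · intro hx i y hy
    have hsingle : Bprod (Pi.single i y) x = B i y (x i) := by
      rw [hBprod, Fintype.sum_eq_single i fun k hk => by simp [hk], Pi.single_eq_same]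
    rw [← hsingle]
    exact hx _ fun k => Submodule.le_comap_single_pi p hy k (Set.mem_univ k)
  · intro hx y hy
    rw [hBprod]
    exact Finset.sum_eq_zero fun i _ => hx i (y i) (hy i)

end Pi

section Centralizer

variable {R L : Type*} [CommRing R] [LieRing L] [LieAlgebra R L]

/-- The centralizer `Z_p(x) = {y ∈ p : ⁅x, y⁆ = 0}` of `x` in a submodule `p` of a Lie algebra. -/
def centralizerIn (p : Submodule R L) (x : L) : Submodule R L :=
  p ⊓ LinearMap.ker (LieAlgebra.ad R L x)

/-- The maximal rank of a centralizer `Z_p(x)` with `x ∈ p` nonzero: the invariant `b`, which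
depends on `𝔥` and the inner product only through `p = 𝔥^⊥`. It is `0` by convention for `p = ⊥`. -/
noncomputable def maxFinrankCentralizerIn (p : Submodule R L) : ℕ :=
  sSup {n | ∃ x ∈ p, x ≠ 0 ∧ n = finrank R (centralizerIn p x)}

lemma bInv_eq_maxFinrankCentralizerIn {𝔤 : Type*} [LieRing 𝔤] [LieAlgebra ℝ 𝔤]
    (B : LinearMap.BilinForm ℝ 𝔤) (𝔥 : Submodule ℝ 𝔤) :
    bInv B 𝔥 = maxFinrankCentralizerIn (B.orthogonal 𝔥) :=
  rfl

lemma centralizerIn_zero (p : Submodule R L) : centralizerIn p 0 = p := by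
  rw [centralizerIn, map_zero, LinearMap.ker_zero, inf_top_eq]

lemma finrank_centralizerIn_le [Nontrivial R] (p : Submodule R L) [Module.Finite R p] (x : L) :
    finrank R (centralizerIn p x) ≤ finrank R p :=
  Submodule.finrank_mono inf_le_left

lemma isGreatest_maxFinrankCentralizerIn [Nontrivial R] {p : Submodule R L} [Module.Finite R p]
    (hp : p ≠ ⊥) :
    IsGreatest {n | ∃ x ∈ p, x ≠ 0 ∧ n = finrank R (centralizerIn p x)}
      (maxFinrankCentralizerIn p) := by
  obtain ⟨x, hx, hx0⟩ := Submodule.exists_mem_ne_zero_of_ne_bot hp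
  have hbdd : BddAbove {n | ∃ x ∈ p, x ≠ 0 ∧ n = finrank R (centralizerIn p x)} := by
    refine ⟨finrank R p, ?_⟩
    rintro _ ⟨y, -, -, rfl⟩
    exact finrank_centralizerIn_le p y
  exact ⟨Nat.sSup_mem ⟨_, x, hx, hx0, rfl⟩ hbdd, fun _ hn => le_csSup hbdd hn⟩

end Centralizer

section PiCentralizer

variable {ι : Type*} {L : ι → Type*} [∀ j, LieRing (L j)] [∀ j, LieAlgebra ℝ (L j)]
  (p : ∀ j, Submodule ℝ (L j))

lemma centralizerIn_pi (x : ∀ j, L j) :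
    centralizerIn (Submodule.pi Set.univ p) x =
      Submodule.pi Set.univ fun j => centralizerIn (p j) (x j) := by
  ext y
  exact ⟨fun ⟨hp, hx⟩ j hj => ⟨hp j hj, congrFun hx j⟩,
    fun h => ⟨fun j hj => (h j hj).1, funext fun j => (h j (Set.mem_univ j)).2⟩⟩

variable [∀ j, Module.Finite ℝ (p j)]

lemma finrank_centralizerIn_pi [Fintype ι] (x : ∀ j, L j) :
    finrank ℝ (centralizerIn (Submodule.pi Set.univ p) x) =
      ∑ j, finrank ℝ (centralizerIn (p j) (x j)) := by
  have (j : ι) : Module.Finite ℝ (centralizerIn (p j) (x j)) :=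
    Submodule.finiteDimensional_inf_left _ _
  rw [centralizerIn_pi, finrank_submodule_pi]

-- A comparison of codimensions, with both sides moved so that no subtraction occurs.
lemma finrank_centralizerIn_pi_add_le [Finite ι] (x : ∀ j, L j) (j : ι) :
    finrank ℝ (centralizerIn (Submodule.pi Set.univ p) x) + finrank ℝ (p j) ≤
      finrank ℝ (centralizerIn (p j) (x j)) + finrank ℝ (Submodule.pi Set.univ p) := by
  classical
  cases nonempty_fintype ι
  have hother : ∑ k ∈ Finset.univ.erase j, finrank ℝ (centralizerIn (p k) (x k)) ≤
      ∑ k ∈ Finset.univ.erase j, finrank ℝ (p k) :=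
    Finset.sum_le_sum fun k _ => finrank_centralizerIn_le (p k) (x k)
  rw [finrank_centralizerIn_pi, finrank_submodule_pi,
    ← Finset.add_sum_erase _ _ (Finset.mem_univ j), ← Finset.add_sum_erase _ _ (Finset.mem_univ j)]
  lia

lemma finrank_centralizerIn_pi_single_add [Finite ι] [DecidableEq ι] (j : ι) (a : L j) :
    finrank ℝ (centralizerIn (Submodule.pi Set.univ p) (Pi.single j a)) + finrank ℝ (p j) =
      finrank ℝ (centralizerIn (p j) a) + finrank ℝ (Submodule.pi Set.univ p) := by
  cases nonempty_fintype ι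
  have hother : ∑ k ∈ Finset.univ.erase j,
        finrank ℝ (centralizerIn (p k) ((Pi.single j a : ∀ k, L k) k)) =
      ∑ k ∈ Finset.univ.erase j, finrank ℝ (p k) :=
    Finset.sum_congr rfl fun k hk => by
      rw [Pi.single_eq_of_ne (Finset.ne_of_mem_erase hk), centralizerIn_zero]
  rw [finrank_centralizerIn_pi, finrank_submodule_pi,
    ← Finset.add_sum_erase _ _ (Finset.mem_univ j), ← Finset.add_sum_erase _ _ (Finset.mem_univ j),
    Pi.single_eq_same, hother]
  lia

variable {p}

theorem maxFinrankCentralizerIn_pi [Fintype ι] [Nonempty ι] (hp : ∀ j, p j ≠ ⊥) :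
    maxFinrankCentralizerIn (Submodule.pi Set.univ p) =
      Finset.univ.sup fun j => maxFinrankCentralizerIn (p j)
        + finrank ℝ (Submodule.pi Set.univ p) - finrank ℝ (p j) := by
  classical
  have : Module.Finite ℝ (Submodule.pi Set.univ p) := .equiv (submodulePiEquiv p).symm
  have hmax_pi := isGreatest_maxFinrankCentralizerIn (pi_univ_ne_bot (hp (Classical.arbitrary ι)))
  have hmax (j : ι) := isGreatest_maxFinrankCentralizerIn (hp j)
  apply le_antisymm
  · obtain ⟨x, hx, hx0, hxmax⟩ := hmax_pi.1
    obtain ⟨j, hxj⟩ := Function.ne_iff.1 hx0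
    have hle := (hmax j).2 ⟨x j, hx j (Set.mem_univ j), hxj, rfl⟩
    have hcodim := finrank_centralizerIn_pi_add_le p x j
    exact Finset.le_sup_of_le (Finset.mem_univ j) (by lia)
  · refine Finset.sup_le fun j _ => ?_
    obtain ⟨a, ha, ha0, hamax⟩ := (hmax j).1
    have hle := hmax_pi.2 ⟨Pi.single j a, Submodule.le_comap_single_pi p ha,
      Pi.single_ne_zero_iff.2 ha0, rfl⟩
    have hcodim := finrank_centralizerIn_pi_single_add p j a
    lia

end PiCentralizer

theorem statement6_general {ι : Type*} [Fintype ι] [Nonempty ι]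
    (𝔤 : ι → Type*) [∀ j, LieRing (𝔤 j)] [∀ j, LieAlgebra ℝ (𝔤 j)]
    (B : ∀ j, LinearMap.BilinForm ℝ (𝔤 j)) (𝔥 : ∀ j, Submodule ℝ (𝔤 j))
    [∀ j, Module.Finite ℝ ((B j).orthogonal (𝔥 j))] (h𝔭 : ∀ j, (B j).orthogonal (𝔥 j) ≠ ⊥)
    (Bprod : LinearMap.BilinForm ℝ (∀ j, 𝔤 j))
    (hBprod : ∀ x y : ∀ j, 𝔤 j, Bprod x y = ∑ j, B j (x j) (y j))
    (𝔥prod : Submodule ℝ (∀ j, 𝔤 j)) (h𝔥prod : 𝔥prod = Submodule.pi Set.univ 𝔥) :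
    bInv Bprod 𝔥prod =
      Finset.univ.sup fun j => bInv (B j) (𝔥 j)
        + finrank ℝ (Bprod.orthogonal 𝔥prod) - finrank ℝ ((B j).orthogonal (𝔥 j)) := by
  simp only [bInv_eq_maxFinrankCentralizerIn]
  rw [h𝔥prod, orthogonal_pi hBprod, maxFinrankCentralizerIn_pi h𝔭]

/-- For a nonempty finite family of finite-dimensional real Lie algebras
`𝔤 j` with invariant inner products `B j` and proper Lie subalgebras `𝔥 j` (with nonzero
orthogonal complements `𝔭 j`), the invariant `b` of the product `(Π 𝔤 j, Π 𝔥 j)` with the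
product inner product equals `max_j (b(𝔤 j, 𝔥 j) + dim 𝔭 − dim 𝔭 j)`, where `𝔭 = Π 𝔭 j` is
the orthogonal complement of `Π 𝔥 j`. -/
theorem statement6 {ι : Type*} [Fintype ι] [Nonempty ι] [DecidableEq ι]
    (𝔤 : ι → Type*) [∀ j, LieRing (𝔤 j)] [∀ j, LieAlgebra ℝ (𝔤 j)]
    [∀ j, Module.Finite ℝ (𝔤 j)]
    (B : ∀ j, LinearMap.BilinForm ℝ (𝔤 j))
    (hsymm : ∀ j, ∀ x y : 𝔤 j, B j x y = B j y x)
    (hposdef : ∀ j, ∀ x : 𝔤 j, x ≠ 0 → 0 < B j x x)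
    (hinv : ∀ j, ∀ x y z : 𝔤 j, B j ⁅z, x⁆ y + B j x ⁅z, y⁆ = 0)
    (𝔥 : ∀ j, LieSubalgebra ℝ (𝔤 j)) (h𝔥 : ∀ j, 𝔥 j ≠ ⊤)
    (h𝔭 : ∀ j, LinearMap.BilinForm.orthogonal (B j) (𝔥 j).toSubmodule ≠ ⊥)
    (Bprod : LinearMap.BilinForm ℝ (∀ j, 𝔤 j))
    (hBprod : ∀ x y : ∀ j, 𝔤 j, Bprod x y = ∑ j, B j (x j) (y j))
    (𝔥prod : Submodule ℝ (∀ j, 𝔤 j))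
    (h𝔥prod : 𝔥prod = Submodule.pi Set.univ fun j => (𝔥 j).toSubmodule) :
    bInv Bprod 𝔥prod =
      Finset.univ.sup fun j =>
        bInv (B j) (𝔥 j).toSubmodule
          + finrank ℝ ↥(LinearMap.BilinForm.orthogonal Bprod 𝔥prod)
          - finrank ℝ ↥(LinearMap.BilinForm.orthogonal (B j) (𝔥 j).toSubmodule) :=
  statement6_general 𝔤 B (fun j => (𝔥 j).toSubmodule) h𝔭 Bprod hBprod 𝔥prod h𝔥prod
end

section
/- Let 𝔤 be a finite-dimensional real Lie algebra equipped with an invariant inner product, let 𝔥 ⊊ 𝔤 be a Lie subalgebra, and let 𝔭 be the orthogonal complement of 𝔥 in 𝔤. Then the maximum over nonzero x ∈ 𝔭 of dim Z_𝔭(x) is at most one half of ( (the maximum over nonzero x ∈ 𝔤 of dim Z_𝔤(x)) + dim 𝔭 − dim 𝔥 ). In other words, b(G/H) ≤ ½( b(G) + dim G/H − dim H ) for a normal homogeneous space G/H. -/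
open Module

/-- The maximum over nonzero `x ∈ 𝔤` of `dim Z_𝔤(x)`; this is `b(G)` for a compact Lie
group `G` with bi-invariant metric. -/
noncomputable def bFull (𝔤 : Type*) [LieRing 𝔤] [LieAlgebra ℝ 𝔤] : ℕ :=
  sSup {n : ℕ | ∃ x : 𝔤, x ≠ 0 ∧
    n = finrank ℝ ↥(LinearMap.ker (LieAlgebra.ad ℝ 𝔤 x))}

/-!
Fix `x ∈ 𝔭`. Invariance and `⁅𝔥, 𝔥⁆ ⊆ 𝔥` give `⁅x, 𝔥⁆ ⊆ 𝔭`. As `ad x` is skew-adjoint for an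
anisotropic form, its range meets its kernel trivially, so `⁅x, 𝔥⁆` and `Z_𝔭(x)` are independent
subspaces of `𝔭` and `dim ⁅x, 𝔥⁆ + dim Z_𝔭(x) ≤ dim 𝔭`. On the other hand
`dim ⁅x, 𝔥⁆ = dim 𝔥 - dim Z_𝔥(x)`, and `dim Z_𝔥(x) + dim Z_𝔭(x) ≤ dim Z_𝔤(x)`. Adding up,
`2 dim Z_𝔭(x) ≤ dim Z_𝔤(x) + dim 𝔭 - dim 𝔥`.
-/

section LinearMap

variable {K V V' : Type*} [Field K] [AddCommGroup V] [Module K V] [AddCommGroup V'] [Module K V']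

theorem finrank_map_add_finrank_inf_ker (f : V →ₗ[K] V') (W : Submodule K V)
    [Module.Finite K W] :
    finrank K (W.map f) + finrank K ↥(W ⊓ LinearMap.ker f) = finrank K W := by
  rw [← LinearMap.finrank_range_add_finrank_ker (f.domRestrict W), LinearMap.range_domRestrict,
    LinearMap.ker_domRestrict, ← Submodule.finrank_map_subtype_eq W (Submodule.comap _ _),
    Submodule.map_comap_subtype]

variable [Module.Finite K V]

theorem finrank_add_finrank_le_of_disjoint_of_le {U W T : Submodule K V} (hUW : Disjoint U W)
    (hU : U ≤ T) (hW : W ≤ T) : finrank K U + finrank K W ≤ finrank K T := by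
  rw [← Submodule.finrank_sup_add_finrank_inf_eq, hUW.eq_bot, finrank_bot, add_zero]
  exact Submodule.finrank_mono (sup_le hU hW)

theorem two_mul_finrank_inf_ker_add_finrank_le {f : End K V} {W P : Submodule K V}
    (hWP : Disjoint W P) (hf : Disjoint (LinearMap.range f) (LinearMap.ker f))
    (hmap : W.map f ≤ P) :
    2 * finrank K ↥(P ⊓ LinearMap.ker f) + finrank K W ≤
      finrank K (LinearMap.ker f) + finrank K P := by
  have h_image : finrank K (W.map f) + finrank K ↥(P ⊓ LinearMap.ker f) ≤ finrank K P :=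
    finrank_add_finrank_le_of_disjoint_of_le
      (hf.mono LinearMap.map_le_range inf_le_right) hmap inf_le_left
  have h_ker : finrank K ↥(W ⊓ LinearMap.ker f) + finrank K ↥(P ⊓ LinearMap.ker f) ≤
      finrank K (LinearMap.ker f) :=
    finrank_add_finrank_le_of_disjoint_of_le
      (hWP.mono inf_le_left inf_le_left) inf_le_right inf_le_right
  have h_rank := finrank_map_add_finrank_inf_ker f W
  lia

end LinearMap

section BilinForm

variable {R M : Type*} [CommRing R] [AddCommGroup M] [Module R M] {B : LinearMap.BilinForm R M}

theorem disjoint_orthogonal_of_anisotropic (hB : B.toQuadraticMap.Anisotropic)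
    (N : Submodule R M) : Disjoint N (B.orthogonal N) :=
  Submodule.disjoint_def.mpr fun x hx hx' ↦ hB x (hx' x hx)

theorem disjoint_range_ker_of_isSkewAdjoint (hB : B.toQuadraticMap.Anisotropic) {f : End R M}
    (hf : B.IsSkewAdjoint f) : Disjoint (LinearMap.range f) (LinearMap.ker f) := by
  rw [Submodule.disjoint_def]
  rintro _ ⟨y, rfl⟩ (hy : f (f y) = 0)
  refine hB _ ?_
  calc B (f y) (f y) = B y (-f (f y)) := hf y (f y)
    _ = 0 := by rw [hy, neg_zero, map_zero]

theorem orthogonal_ne_bot_of_ne_top {K V : Type*} [Field K] [AddCommGroup V] [Module K V]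
    [Module.Finite K V] (B : LinearMap.BilinForm K V) {W : Submodule K V} (hW : W ≠ ⊤) :
    B.orthogonal W ≠ ⊥ := by
  intro h
  have h_dim := LinearMap.BilinForm.finrank_add_finrank_orthogonal' (B := B) W
  rw [h, finrank_bot] at h_dim
  have h_lt := Submodule.finrank_lt hW
  lia

end BilinForm

section LieAlgebra

variable {R L : Type*} [CommRing R] [LieRing L] [LieAlgebra R L] {B : LinearMap.BilinForm R L}

theorem isSkewAdjoint_ad_of_lieInvariant (hB : B.lieInvariant L) (x : L) :
    B.IsSkewAdjoint (LieAlgebra.ad R L x) := fun y z ↦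
  (hB x y z).trans (map_neg (B y) ⁅x, z⁆).symm

theorem map_ad_le_orthogonal_of_mem_orthogonal (hB : B.lieInvariant L)
    (H : LieSubalgebra R L) {x : L} (hx : x ∈ B.orthogonal H.toSubmodule) :
    H.toSubmodule.map (LieAlgebra.ad R L x) ≤ B.orthogonal H.toSubmodule := by
  rintro _ ⟨h, hh, rfl⟩ k hk
  calc B k ⁅x, h⁆ = -B k ⁅h, x⁆ := by rw [← lie_skew, map_neg]
    _ = B ⁅h, k⁆ x := (hB h k x).symm
    _ = 0 := hx _ (H.lie_mem hh hk)

end LieAlgebra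

/-- The set of dimensions of the centralizers `Z_P(x)` of the nonzero elements `x` of a subspace
`P` of a Lie algebra. -/
def centralizerFinranks {K L : Type*} [Field K] [LieRing L] [LieAlgebra K L]
    (P : Submodule K L) : Set ℕ :=
  {n : ℕ | ∃ x : L, x ∈ P ∧ x ≠ 0 ∧ n = finrank K ↥(P ⊓ LinearMap.ker (LieAlgebra.ad K L x))}

/-- The maximum over nonzero `x ∈ P` of the dimension of the centralizer `Z_P(x)`. It covers both
`bInv` (for `P = 𝔥^⊥`) and `bFull` (for `P = ⊤`), over any field. By the convention for `sSup` on
`ℕ` it is `0` when `P = ⊥`. -/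
noncomputable def maxCentralizerFinrank {K L : Type*} [Field K] [LieRing L] [LieAlgebra K L]
    (P : Submodule K L) : ℕ :=
  sSup (centralizerFinranks P)

theorem bInv_eq_maxCentralizerFinrank {𝔤 : Type*} [LieRing 𝔤] [LieAlgebra ℝ 𝔤]
    (B : LinearMap.BilinForm ℝ 𝔤) (𝔥 : Submodule ℝ 𝔤) :
    bInv B 𝔥 = maxCentralizerFinrank (B.orthogonal 𝔥) := rfl

theorem bFull_eq_maxCentralizerFinrank_top (𝔤 : Type*) [LieRing 𝔤] [LieAlgebra ℝ 𝔤] :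
    bFull 𝔤 = maxCentralizerFinrank (⊤ : Submodule ℝ 𝔤) := by
  refine congrArg sSup (Set.ext fun n ↦ exists_congr fun x ↦ ?_)
  rw [top_inf_eq, and_iff_right Submodule.mem_top]

section maxCentralizerFinrank

variable {K L : Type*} [Field K] [LieRing L] [LieAlgebra K L] [Module.Finite K L]

theorem bddAbove_centralizerFinranks (P : Submodule K L) : BddAbove (centralizerFinranks P) := by
  refine ⟨finrank K L, ?_⟩
  rintro _ ⟨x, -, -, rfl⟩
  exact Submodule.finrank_le _

theorem finrank_centralizer_le_maxCentralizerFinrank {P : Submodule K L} {x : L} (hx : x ∈ P)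
    (hx0 : x ≠ 0) :
    finrank K ↥(P ⊓ LinearMap.ker (LieAlgebra.ad K L x)) ≤ maxCentralizerFinrank P :=
  le_csSup (bddAbove_centralizerFinranks P) ⟨x, hx, hx0, rfl⟩

theorem maxCentralizerFinrank_mem_centralizerFinranks {P : Submodule K L} (hP : P ≠ ⊥) :
    maxCentralizerFinrank P ∈ centralizerFinranks P := by
  obtain ⟨x, hx, hx0⟩ := Submodule.exists_mem_ne_zero_of_ne_bot hP
  exact Nat.sSup_mem ⟨_, x, hx, hx0, rfl⟩ (bddAbove_centralizerFinranks P)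

end maxCentralizerFinrank

theorem two_mul_finrank_centralizer_orthogonal_add_finrank_le {K L : Type*} [Field K] [LieRing L]
    [LieAlgebra K L] [Module.Finite K L] {B : LinearMap.BilinForm K L}
    (hB : B.toQuadraticMap.Anisotropic) (hinv : B.lieInvariant L) (H : LieSubalgebra K L) {x : L}
    (hx : x ∈ B.orthogonal H.toSubmodule) :
    2 * finrank K ↥(B.orthogonal H.toSubmodule ⊓ LinearMap.ker (LieAlgebra.ad K L x)) +
        finrank K H ≤
      finrank K (LinearMap.ker (LieAlgebra.ad K L x)) +
        finrank K (B.orthogonal H.toSubmodule) :=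
  two_mul_finrank_inf_ker_add_finrank_le (disjoint_orthogonal_of_anisotropic hB H.toSubmodule)
    (disjoint_range_ker_of_isSkewAdjoint hB (isSkewAdjoint_ad_of_lieInvariant hinv x))
    (map_ad_le_orthogonal_of_mem_orthogonal hinv H hx)

theorem statement8_general {K L : Type*} [Field K] [LieRing L] [LieAlgebra K L]
    [Module.Finite K L] (B : LinearMap.BilinForm K L) (hB : B.toQuadraticMap.Anisotropic)
    (hinv : B.lieInvariant L) (H : LieSubalgebra K L) (hH : H ≠ ⊤) :
    (maxCentralizerFinrank (B.orthogonal H.toSubmodule) : ℚ) ≤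
      ((maxCentralizerFinrank (⊤ : Submodule K L) : ℚ)
        + (finrank K (B.orthogonal H.toSubmodule) : ℚ) - (finrank K H : ℚ)) / 2 := by
  have hP : B.orthogonal H.toSubmodule ≠ ⊥ :=
    orthogonal_ne_bot_of_ne_top B (mt H.toSubmodule_eq_top.mp hH)
  obtain ⟨x, hx, hx0, hmax⟩ := maxCentralizerFinrank_mem_centralizerFinranks hP
  have h_point := two_mul_finrank_centralizer_orthogonal_add_finrank_le hB hinv H hx
  have h_full := finrank_centralizer_le_maxCentralizerFinrank (K := K) Submodule.mem_top hx0
  rw [top_inf_eq] at h_full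
  rw [← hmax] at h_point
  have h_nat := h_point.trans (Nat.add_le_add_right h_full _)
  rw [le_div_iff₀' two_pos, le_sub_iff_add_le]
  exact_mod_cast h_nat

/-- Let `𝔤` be a finite-dimensional real Lie algebra with an invariant
inner product, `𝔥 ⊊ 𝔤` a Lie subalgebra and `𝔭` its orthogonal complement.  Then
`b(G/H) ≤ ½ (b(G) + dim 𝔭 − dim 𝔥)`. -/
theorem statement8 {𝔤 : Type*} [LieRing 𝔤] [LieAlgebra ℝ 𝔤] [Module.Finite ℝ 𝔤]
    (B : LinearMap.BilinForm ℝ 𝔤)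
    (hsymm : ∀ x y : 𝔤, B x y = B y x)
    (hposdef : ∀ x : 𝔤, x ≠ 0 → 0 < B x x)
    (hinv : ∀ x y z : 𝔤, B ⁅z, x⁆ y + B x ⁅z, y⁆ = 0)
    (𝔥 : LieSubalgebra ℝ 𝔤) (h𝔥 : 𝔥 ≠ ⊤) :
    (bInv B 𝔥.toSubmodule : ℚ) ≤
      ((bFull 𝔤 : ℚ)
        + (finrank ℝ ↥(LinearMap.BilinForm.orthogonal B 𝔥.toSubmodule) : ℚ)
        - (finrank ℝ ↥𝔥 : ℚ)) / 2 := by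
  rw [bInv_eq_maxCentralizerFinrank, bFull_eq_maxCentralizerFinrank_top]
  exact statement8_general B (fun x hx ↦ by_contra fun hne ↦ (hposdef x hne).ne' hx)
    (fun z x y ↦ eq_neg_of_add_eq_zero_left (hinv x y z)) 𝔥 h𝔥
end
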